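/- arXiv:2509.07836 — 4 statements merged into one kernel-verified Lean document; each statement's English description precedes it below -/
import Mathlib

section
/- Fix Ω_max > 0 and let B := {s ∈ ℝⁿ : ‖s‖ ≤ Ω_max}. If x ∈ ℝⁿ is a K-critical point of F — in particular, if x is a weakly ≼ˡ_K-minimal solution — then θ(x) := min_{(a, s) ∈ P_x × B} Θ_x(a, s) = 0. -/
/-!
`Δ_{-K}(y) < 0` forces `y ∈ -int K`, so criticality implies that for every `a ∈ P_x` and
every `s` some `Δ_{-K}(Df^{a_j}(x)s)` is nonnegative; hence `Θ_x ≥ 0`. Since `Δ_{-K}(0) = 0`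
(`oriDist_neg_zero`), `Θ_x(a, 0) = 0`, and the minimum is `0`.

A weakly minimal point is critical (`kCritical_of_weaklyMinimal`): along a direction `s` with
`Df^{a_j}(x)s ∈ -int K` for all `j`, a small step `t > 0` puts every minimal value `f^{a_j}(x)` in
`F(x + ts) + int K`. Every value of the finite set `F(x)` lies above a minimal one
(`exists_mem_minSet`), and `int K + K ⊆ int K`, so `F(x + ts) ≺ˡ_K F(x)`.

When `P_x` is empty, `θ(x)` is the infimum of the empty set of reals, which is `0` in Lean.
-/


open Set Filter Topology Pointwise

noncomputable section

/-- Euclidean space ℝⁿ. -/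
abbrev Rvec (n : ℕ) := EuclideanSpace ℝ (Fin n)

/-- The oriented distance function Δ_A(y) := dist(y, A) − dist(y, Aᶜ). -/
def oriDist {E : Type*} [NormedAddCommGroup E] (A : Set E) (y : E) : ℝ :=
  Metric.infDist y A - Metric.infDist y Aᶜ

/-- K-minimal elements of A: Min(A, K) = {y ∈ A : (y − K) ∩ A = {y}}. -/
def minSet {E : Type*} [AddGroup E] (K A : Set E) : Set E :=
  {y ∈ A | {z ∈ A | y - z ∈ K} = {y}}

/-- Weakly K-minimal elements of A: WMin(A, K) = {y ∈ A : (y − int K) ∩ A = ∅}. -/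
def wminSet {E : Type*} [AddGroup E] [TopologicalSpace E] (K A : Set E) : Set E :=
  {y ∈ A | {z ∈ A | y - z ∈ interior K} = ∅}

/-- A closed, convex, pointed cone with nonempty interior. -/
structure IsSolidPointedCone {E : Type*} [NormedAddCommGroup E] [NormedSpace ℝ E]
    (K : Set E) : Prop where
  closed : IsClosed K
  convex : Convex ℝ K
  cone : ∀ ⦃t : ℝ⦄, 0 ≤ t → ∀ ⦃y⦄, y ∈ K → t • y ∈ K
  pointed : K ∩ (-K) ⊆ {0}
  solid : (interior K).Nonempty

variable {n m p : ℕ}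

/-- The set-valued objective F(x) = {f¹(x), …, fᵖ(x)}. -/
def Fimg (f : Fin p → Rvec n → Rvec m) (x : Rvec n) : Set (Rvec m) :=
  Set.range fun i => f i x

/-- ω(x) := |Min(F(x), K)|. -/
def omegaF (K : Set (Rvec m)) (f : Fin p → Rvec n → Rvec m) (x : Rvec n) : ℕ :=
  (minSet K (Fimg f x)).ncard

/-- The partition set P_x: tuples a = (a₁, …, a_{ω(x)}) of indices with
each f^{a_j}(x) ∈ Min(F(x), K) and j ↦ f^{a_j}(x) an enumeration of WMin(F(x), K). -/
def partSet (K : Set (Rvec m)) (f : Fin p → Rvec n → Rvec m) (x : Rvec n) :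
    Set (Fin (omegaF K f x) → Fin p) :=
  {a | (∀ j, f (a j) x ∈ minSet K (Fimg f x)) ∧
    Function.Injective (fun j => f (a j) x) ∧
    (Set.range fun j => f (a j) x) = wminSet K (Fimg f x)}

/-- The quadratic model m^i(s) := Df^i(x)s + ½ D²f^i(x)[s, s]. -/
def model (f : Fin p → Rvec n → Rvec m) (i : Fin p) (x s : Rvec n) : Rvec m :=
  fderiv ℝ (f i) x s + (2⁻¹ : ℝ) • fderiv ℝ (fderiv ℝ (f i)) x s s

/-- Θ_x(a, s) := max_j max{Δ_{−K}(m^{a_j}(s)), Δ_{−K}(Df^{a_j}(x)s)}. -/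
def Theta (K : Set (Rvec m)) (f : Fin p → Rvec n → Rvec m) (x : Rvec n)
    (a : Fin (omegaF K f x) → Fin p) (s : Rvec n) : ℝ :=
  ⨆ j : Fin (omegaF K f x),
    max (oriDist (-K) (model f (a j) x s)) (oriDist (-K) (fderiv ℝ (f (a j)) x s))

/-- θ(x) := min over (a, s) ∈ P_x × {‖s‖ ≤ Ωmax} of Θ_x(a, s). -/
def thetaVal (K : Set (Rvec m)) (f : Fin p → Rvec n → Rvec m) (Ωmax : ℝ) (x : Rvec n) : ℝ :=
  sInf {r | ∃ a ∈ partSet K f x, ∃ s : Rvec n, ‖s‖ ≤ Ωmax ∧ r = Theta K f x a s}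

/-- x is a K-critical point of F: there are no a ∈ P_x and s with
Df^{a_j}(x)s ∈ −int K for all j. -/
def KCritical (K : Set (Rvec m)) (f : Fin p → Rvec n → Rvec m) (x : Rvec n) : Prop :=
  ¬ ∃ a ∈ partSet K f x, ∃ s : Rvec n, ∀ j, fderiv ℝ (f (a j)) x s ∈ -(interior K)

/-- Lower set-less relation: A ≼ˡ_K B iff B ⊆ A + K. -/
def lowerLe (K A B : Set (Rvec m)) : Prop := B ⊆ A + K

/-- Strict lower set-less relation: A ≺ˡ_K B iff B ⊆ A + int K. -/
def lowerLt (K A B : Set (Rvec m)) : Prop := B ⊆ A + interior K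

/-- x is a regular point of F. -/
def RegularPt (K : Set (Rvec m)) (f : Fin p → Rvec n → Rvec m) (x : Rvec n) : Prop :=
  minSet K (Fimg f x) = wminSet K (Fimg f x) ∧
    ∀ᶠ y in 𝓝 x, omegaF K f y = omegaF K f x

section Cone

variable {E : Type*} [NormedAddCommGroup E] {K : Set E}

lemma mem_neg_interior_of_oriDist_neg {y : E} (h : oriDist (-K) y < 0) :
    y ∈ -(interior K) := by
  have hpos : 0 < Metric.infDist y (-K)ᶜ := by
    have := Metric.infDist_nonneg (x := y) (s := -K)
    unfold oriDist at h
    linarith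
  have hy : y ∉ closure (-K)ᶜ := fun hc => by
    rw [Metric.infDist_zero_of_mem_closure hc] at hpos
    exact lt_irrefl _ hpos
  rw [closure_compl, Set.notMem_compl_iff] at hy
  have hpre : (-K : Set E) = (Homeomorph.neg E) ⁻¹' K := rfl
  rw [hpre, ← Homeomorph.preimage_interior] at hy
  exact hy

variable [NormedSpace ℝ E]

lemma IsSolidPointedCone.zero_mem (hK : IsSolidPointedCone K) : (0 : E) ∈ K := by
  obtain ⟨y, hy⟩ := hK.solid
  simpa using hK.cone le_rfl (interior_subset hy)

lemma IsSolidPointedCone.add_mem (hK : IsSolidPointedCone K) {y z : E} (hy : y ∈ K)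
    (hz : z ∈ K) : y + z ∈ K := by
  have h := hK.convex (hK.cone zero_le_two hy) (hK.cone zero_le_two hz)
    (by norm_num : (0 : ℝ) ≤ 2⁻¹) (by norm_num : (0 : ℝ) ≤ 2⁻¹) (by norm_num)
  simpa [smul_smul] using h

lemma IsSolidPointedCone.interior_add_mem (hK : IsSolidPointedCone K) {y z : E}
    (hy : y ∈ interior K) (hz : z ∈ K) : y + z ∈ interior K := by
  have hsub : K + K ⊆ K := by
    rintro _ ⟨u, hu, v, hv, rfl⟩
    exact hK.add_mem hu hv
  exact interior_mono hsub (subset_interior_add_left (Set.add_mem_add hy hz))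

lemma IsSolidPointedCone.smul_interior_mem (hK : IsSolidPointedCone K) {t : ℝ} (ht : 0 < t)
    {y : E} (hy : y ∈ interior K) : t • y ∈ interior K := by
  have hsub : t • K ⊆ K := by
    rintro _ ⟨u, hu, rfl⟩
    exact hK.cone ht.le hu
  have h : t • y ∈ t • interior K := Set.smul_mem_smul_set hy
  rw [← interior_smul₀ ht.ne'] at h
  exact interior_mono hsub h

/-- The origin belongs to `-K` and to the closure of its complement, unless that complement is
empty, in which case the distance to it is `0` by convention. -/
lemma oriDist_neg_zero (hK : IsSolidPointedCone K) : oriDist (-K) (0 : E) = 0 := by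
  have h1 : Metric.infDist (0 : E) (-K) = 0 :=
    Metric.infDist_zero_of_mem (by simpa using hK.zero_mem)
  have h2 : Metric.infDist (0 : E) (-K)ᶜ = 0 := by
    rcases ((-K)ᶜ).eq_empty_or_nonempty with h | ⟨z, hz⟩
    · rw [h, Metric.infDist_empty]
    · rw [← Metric.mem_closure_iff_infDist_zero ⟨z, hz⟩]
      have hlim : Tendsto (fun t : ℝ => t • z) (𝓝[>] 0) (𝓝 0) := by
        have : Tendsto (fun t : ℝ => t • z) (𝓝 0) (𝓝 ((0 : ℝ) • z)) :=
          (continuous_id.smul continuous_const).tendsto 0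
        rw [zero_smul] at this
        exact this.mono_left nhdsWithin_le_nhds
      refine mem_closure_of_tendsto hlim ?_
      filter_upwards [self_mem_nhdsWithin] with t ht hmem
      have ht : (0 : ℝ) < t := ht
      apply hz
      have := hK.cone (inv_nonneg.2 ht.le) (Set.mem_neg.1 hmem)
      rw [smul_neg, smul_smul, inv_mul_cancel₀ ht.ne', one_smul] at this
      exact this
  rw [oriDist, h1, h2, sub_zero]

/-- Domination property: each element of a finite set lies above a `K`-minimal one. -/
lemma exists_mem_minSet (hK : IsSolidPointedCone K) {A : Set E} (hA : A.Finite) {y : E}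
    (hy : y ∈ A) : ∃ z ∈ minSet K A, y - z ∈ K := by
  let _ : PartialOrder E :=
    { le := fun u v => v - u ∈ K
      le_refl := fun u => by
        rw [sub_self]
        exact hK.zero_mem
      le_trans := fun u v w huv hvw => by
        rw [← sub_add_sub_cancel w v u]
        exact hK.add_mem hvw huv
      le_antisymm := fun u v huv hvu => by
        have : v - u ∈ K ∩ -K := ⟨huv, by rw [Set.mem_neg, neg_sub]; exact hvu⟩
        exact (sub_eq_zero.1 (hK.pointed this)).symm }
  obtain ⟨z, hzy, hz⟩ := hA.exists_le_minimal hy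
  refine ⟨z, ⟨hz.prop, ?_⟩, hzy⟩
  ext w
  refine ⟨fun hw => hz.eq_of_le hw.1 hw.2, ?_⟩
  rintro rfl
  exact ⟨hz.prop, le_refl w⟩

end Cone

lemma kCritical_of_weaklyMinimal {n m p : ℕ} {K : Set (Rvec m)} (hK : IsSolidPointedCone K)
    {f : Fin p → Rvec n → Rvec m} (hf : ∀ i, ContDiff ℝ 2 (f i)) {x : Rvec n}
    (hx : ¬ ∃ x' : Rvec n, lowerLt K (Fimg f x') (Fimg f x)) : KCritical K f x := by
  rintro ⟨a, ha, s, hs⟩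
  have hev : ∀ j, ∀ᶠ t : ℝ in 𝓝[>] 0,
      f (a j) x - f (a j) (x + t • s) ∈ interior K := by
    intro j
    have hd : HasFDerivAt (f (a j)) (fderiv ℝ (f (a j)) x) x :=
      ((hf (a j)).differentiable (by norm_num) x).hasFDerivAt
    have hlim := (hd.hasLineDerivAt s).tendsto_slope_zero_right.neg
    filter_upwards [hlim.eventually (isOpen_interior.mem_nhds (hs j)), self_mem_nhdsWithin]
      with t ht htpos
    have htpos : (0 : ℝ) < t := htpos
    have := hK.smul_interior_mem htpos ht
    rwa [smul_neg, smul_smul, mul_inv_cancel₀ htpos.ne', one_smul, neg_sub] at this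
  obtain ⟨t, ht⟩ := (eventually_all.2 hev).exists
  refine hx ⟨x + t • s, fun y hy => ?_⟩
  obtain ⟨z, hz, hyz⟩ := exists_mem_minSet hK (A := Fimg f x) (Set.finite_range _) hy
  -- `ω(x)` distinct minimal values are all the minimal values.
  have hrange : Set.range (fun j => f (a j) x) = minSet K (Fimg f x) := by
    refine Set.eq_of_subset_of_ncard_le ?_ ?_ ((Set.finite_range _).subset fun _ h => h.1)
    · rintro _ ⟨j, rfl⟩
      exact ha.1 j
    · rw [← Set.image_univ, Set.ncard_image_of_injective _ ha.2.1, Set.ncard_univ, Nat.card_fin]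
      exact le_rfl
  rw [← hrange] at hz
  obtain ⟨j, rfl⟩ := hz
  refine ⟨f (a j) (x + t • s), ⟨a j, rfl⟩, y - f (a j) (x + t • s), ?_, add_sub_cancel _ _⟩
  have := hK.interior_add_mem (ht j) hyz
  rwa [add_comm, sub_add_sub_cancel] at this

/-- if x is a K-critical point of F (in particular, if x is a weakly
≼ˡ_K-minimal solution), then θ(x) = 0. -/
theorem stmt1 (n m p : ℕ) (K : Set (Rvec m)) (hK : IsSolidPointedCone K)
    (f : Fin p → Rvec n → Rvec m) (hf : ∀ i, ContDiff ℝ 2 (f i))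
    (Ωmax : ℝ) (hΩ : 0 < Ωmax) (x : Rvec n)
    (hx : KCritical K f x ∨ ¬ ∃ x' : Rvec n, lowerLt K (Fimg f x') (Fimg f x)) :
    thetaVal K f Ωmax x = 0 := by
  have hcrit : KCritical K f x := hx.elim id (kCritical_of_weaklyMinimal hK hf)
  rcases (partSet K f x).eq_empty_or_nonempty with h | ⟨a, ha⟩
  · simp [thetaVal, h]
  refine IsLeast.csInf_eq ⟨⟨a, ha, 0, by simpa using hΩ.le, ?_⟩, ?_⟩
  · simp [Theta, model, oriDist_neg_zero hK]
  · rintro _ ⟨b, hb, s, -, rfl⟩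
    obtain ⟨j, hj⟩ : ∃ j, 0 ≤ oriDist (-K) (fderiv ℝ (f (b j)) x s) := by
      by_contra! hneg
      exact hcrit ⟨b, hb, s, fun j => mem_neg_interior_of_oriDist_neg (hneg j)⟩
    exact (hj.trans (le_max_right _ _)).trans (le_ciSup (f := fun j =>
      max (oriDist (-K) (model f (b j) x s)) (oriDist (-K) (fderiv ℝ (f (b j)) x s)))
      (Set.finite_range _).bddAbove j)
end
end

section
/- Let x ∈ ℝⁿ be not a K-critical point of F, Ω > 0, B := {s ∈ ℝⁿ : ‖s‖ ≤ Ω}, and let (a, s*) ∈ P_x × B attain the minimum of Θ_x over P_x × B. Then for every j ∈ {1, …, ω(x)} the denominator Δ_{−K}(m^{a_j}(0) − m^{a_j}(s*)) is positive, and f^{a_j}(x + s*) − f^{a_j}(x) ∈ −int K if and only if the reduction ratio ρ^{a_j} := −Δ_{−K}(f^{a_j}(x + s*) − f^{a_j}(x)) / Δ_{−K}(m^{a_j}(0) − m^{a_j}(s*)) is positive. -/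
/-!
The proof rests on the sign characterisation of the oriented distance: for a nonempty proper set `A`,
`oriDist A y < 0` exactly when `y` is interior to `A`, and `oriDist A y > 0` off the closure of `A`.

At a non-critical point there are `a' ∈ P_x` and `s` with all `Df^{a'_j}(x) s ∈ -int K`. As
`m^i(t s) = t (Df^i(x) s + (t / 2) D²f^i(x)[s, s])`, openness of `-int K` and the cone property show
that, for small `t > 0`, both the linear and the quadratic models at `t s` lie in `-int K`, whence
`Θ_x(a', t s) < 0`. By minimality `Θ_x(a, s*) < 0`, so `m^{a_j}(s*) ∈ -int K` for all `j`. Then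
`m^{a_j}(0) - m^{a_j}(s*) = -m^{a_j}(s*)` lies in `int K`, and pointedness keeps it out of the
closed set `-K`, so the denominator is positive. The equivalence is the sign characterisation
applied to the numerator.

That `0 ∉ int K`, which makes `K` proper and excludes the degenerate case `m = 0`, follows from
the membership of `f^{a_j}(x)` in the set of weakly minimal elements.
-/

open Set Filter Topology Pointwise

noncomputable section

variable {n m p : ℕ}

/-- Properness of `A` is needed because `Metric.infDist y ∅ = 0`. -/
lemma oriDist_neg_iff {E : Type*} [NormedAddCommGroup E] {A : Set E}
    (hA : Aᶜ.Nonempty) (y : E) : oriDist A y < 0 ↔ y ∈ interior A := by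
  have key : 0 < Metric.infDist y Aᶜ ↔ y ∈ interior A := by
    rw [← not_iff_not, not_lt, ← mem_compl_iff, ← closure_compl,
      Metric.mem_closure_iff_infDist_zero hA]
    exact ⟨fun h => le_antisymm h Metric.infDist_nonneg, fun h => h.le⟩
  unfold oriDist
  constructor
  · intro h
    rw [← key]
    have := Metric.infDist_nonneg (x := y) (s := A)
    linarith
  · intro h
    have h0 := Metric.infDist_zero_of_mem (interior_subset h)
    have := key.2 h
    linarith

lemma oriDist_pos_of_notMem {E : Type*} [NormedAddCommGroup E] {A : Set E}
    (hc : IsClosed A) (hA : A.Nonempty) {y : E} (hy : y ∉ A) : 0 < oriDist A y := by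
  have h1 := (hc.notMem_iff_infDist_pos hA).1 hy
  have h2 : Metric.infDist y Aᶜ = 0 := Metric.infDist_zero_of_mem hy
  unfold oriDist
  linarith

lemma IsSolidPointedCone.smul_mem_interior {E : Type*} [NormedAddCommGroup E] [NormedSpace ℝ E]
    {K : Set E} (hK : IsSolidPointedCone K) {t : ℝ} (ht : 0 < t) {y : E}
    (hy : y ∈ interior K) : t • y ∈ interior K := by
  have h : t • K ⊆ K := by
    rintro _ ⟨z, hz, rfl⟩
    exact hK.cone ht.le hz
  have h2 := interior_mono h
  rw [interior_smul₀ ht.ne'] at h2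
  exact h2 (smul_mem_smul_set hy)

lemma model_smul (f : Fin p → Rvec n → Rvec m) (i : Fin p) (x s : Rvec n) (t : ℝ) :
    model f i x (t • s) =
      t • (fderiv ℝ (f i) x s + (t * 2⁻¹) • fderiv ℝ (fderiv ℝ (f i)) x s s) := by
  simp only [model, map_smul, _root_.smul_apply, smul_add, smul_smul]
  congr 2
  ring

/-- A descent direction for the linear models, suitably shortened, is a descent direction for the
quadratic models too. -/
lemma exists_small_step {ι : Type*} [Finite ι] {K : Set (Rvec m)} (hK : IsSolidPointedCone K)
    (f : Fin p → Rvec n → Rvec m) (x s : Rvec n) (b : ι → Fin p)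
    (hb : ∀ j, fderiv ℝ (f (b j)) x s ∈ -(interior K)) {Ω : ℝ} (hΩ : 0 < Ω) :
    ∃ s' : Rvec n, ‖s'‖ ≤ Ω ∧ ∀ j, model f (b j) x s' ∈ -(interior K) ∧
      fderiv ℝ (f (b j)) x s' ∈ -(interior K) := by
  have hopen : IsOpen (-(interior K)) := isOpen_interior.neg
  have hnorm : ∀ᶠ t : ℝ in 𝓝 0, ‖t • s‖ < Ω := by
    have hc : Continuous fun t : ℝ => ‖t • s‖ := by fun_prop
    exact hc.continuousAt.eventually_lt continuousAt_const (by simpa using hΩ)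
  have hmod : ∀ᶠ t : ℝ in 𝓝 0, ∀ j, fderiv ℝ (f (b j)) x s +
      (t * 2⁻¹) • fderiv ℝ (fderiv ℝ (f (b j))) x s s ∈ -(interior K) := by
    rw [eventually_all]
    intro j
    have hc : Continuous fun t : ℝ => fderiv ℝ (f (b j)) x s +
      (t * 2⁻¹) • fderiv ℝ (fderiv ℝ (f (b j))) x s s := by fun_prop
    exact hc.continuousAt.eventually_mem (hopen.mem_nhds (by simpa using hb j))
  have hpos : ∀ᶠ t : ℝ in 𝓝[>] 0, 0 < t := eventually_mem_nhdsWithin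
  obtain ⟨t, ⟨ht1, ht2⟩, ht⟩ :=
    (((hnorm.and hmod).filter_mono nhdsWithin_le_nhds).and hpos).exists
  have hsm : ∀ y ∈ -(interior K), t • y ∈ -(interior K) := by
    intro y hy
    rw [Set.mem_neg] at hy ⊢
    rw [← smul_neg]
    exact hK.smul_mem_interior ht hy
  refine ⟨t • s, ht1.le, fun j => ⟨?_, ?_⟩⟩
  · rw [model_smul]
    exact hsm _ (ht2 j)
  · rw [map_smul]
    exact hsm _ (hb j)

/-- at a non-K-critical x, for a minimizing pair (a, s*) of Θ_x over
P_x × B, each denominator Δ_{−K}(m^{a_j}(0) − m^{a_j}(s*)) is positive, and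
f^{a_j}(x + s*) − f^{a_j}(x) ∈ −int K iff the reduction ratio ρ^{a_j} is positive. -/
theorem stmt4 (n m p : ℕ) (K : Set (Rvec m)) (hK : IsSolidPointedCone K)
    (f : Fin p → Rvec n → Rvec m) (hf : ∀ i, ContDiff ℝ 2 (f i))
    (x : Rvec n) (hxc : ¬ KCritical K f x) (Ω : ℝ) (hΩ : 0 < Ω)
    (a : Fin (omegaF K f x) → Fin p) (sstar : Rvec n)
    (ha : a ∈ partSet K f x) (hs : ‖sstar‖ ≤ Ω)
    (hmin : ∀ a' ∈ partSet K f x, ∀ s : Rvec n, ‖s‖ ≤ Ω →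
      Theta K f x a sstar ≤ Theta K f x a' s) :
    ∀ j, 0 < oriDist (-K) (model f (a j) x 0 - model f (a j) x sstar) ∧
      (f (a j) (x + sstar) - f (a j) x ∈ -(interior K) ↔
        0 < -(oriDist (-K) (f (a j) (x + sstar) - f (a j) x)) /
              oriDist (-K) (model f (a j) x 0 - model f (a j) x sstar)) := by
  intro j
  -- The weakly minimal value `f^{a_j}(x)` is not dominated by itself.
  have h0 : (0 : Rvec m) ∉ interior K := by
    have hw : f (a j) x ∈ wminSet K (Fimg f x) := ha.2.2 ▸ mem_range_self j
    intro h
    have : f (a j) x ∈ {z ∈ Fimg f x | f (a j) x - z ∈ interior K} := ⟨hw.1, by simpa using h⟩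
    rw [hw.2] at this
    exact this
  have hne : (-K).Nonempty := (hK.solid.mono interior_subset).neg
  have hprop : (-K)ᶜ.Nonempty := by
    rw [nonempty_compl]
    intro h
    rw [neg_eq_iff_eq_neg] at h
    apply h0
    simp [h]
  have hint : interior (-K) = -(interior K) :=
    ((Homeomorph.neg (Rvec m)).preimage_interior K).symm
  have hneg : ∀ y, oriDist (-K) y < 0 ↔ y ∈ -(interior K) := by
    intro y
    rw [oriDist_neg_iff hprop, hint]
  obtain ⟨a', ha', s, hs'⟩ := not_not.1 hxc
  obtain ⟨s', hs'Ω, hs'j⟩ := exists_small_step hK f x s a' hs' hΩ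
  have : Nonempty (Fin (omegaF K f x)) := ⟨j⟩
  have hT' : Theta K f x a' s' < 0 := by
    obtain ⟨i, hi⟩ := exists_eq_ciSup_of_finite (f := fun j : Fin (omegaF K f x) =>
      max (oriDist (-K) (model f (a' j) x s')) (oriDist (-K) (fderiv ℝ (f (a' j)) x s')))
    unfold Theta
    rw [← hi]
    exact max_lt ((hneg _).2 (hs'j i).1) ((hneg _).2 (hs'j i).2)
  have hT : Theta K f x a sstar < 0 := (hmin a' ha' s' hs'Ω).trans_lt hT'
  have hm : model f (a j) x sstar ∈ -(interior K) := by
    rw [← hneg]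
    refine lt_of_le_of_lt ((le_max_left _ (oriDist (-K) (fderiv ℝ (f (a j)) x sstar))).trans ?_) hT
    exact le_ciSup (f := fun j : Fin (omegaF K f x) =>
      max (oriDist (-K) (model f (a j) x sstar)) (oriDist (-K) (fderiv ℝ (f (a j)) x sstar)))
      (Set.finite_range _).bddAbove j
  have hden : 0 < oriDist (-K) (model f (a j) x 0 - model f (a j) x sstar) := by
    have hz : model f (a j) x 0 - model f (a j) x sstar = -model f (a j) x sstar := by
      simp [model]
    rw [hz]
    refine oriDist_pos_of_notMem hK.closed.neg hne fun hmem => h0 ?_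
    have hzero : -model f (a j) x sstar = 0 := hK.pointed ⟨interior_subset hm, hmem⟩
    rw [← hzero]
    exact hm
  refine ⟨hden, ?_⟩
  rw [div_pos_iff_of_pos_right hden, neg_pos, hneg]
end
end

section
/- Let x ∈ ℝⁿ, a ∈ P_x, ω := ω(x), and suppose s ∈ ℝⁿ is a K^{ω}-descent direction of f̃ᵃ := (f^{a₁}, …, f^{a_ω}) at x, i.e., there exists t₀ > 0 such that f^{a_j}(x + t s) − f^{a_j}(x) ∈ −int K for all t ∈ (0, t₀] and all j ∈ {1, …, ω}. Then s is a ≼ˡ_K-descent direction of F at x: there exists t₀' > 0 such that F(x + t s) ≺ˡ_K F(x), i.e., F(x) ⊆ F(x + t s) + int K, for all t ∈ (0, t₀']. -/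
/-!
Each point `y` of the finite set `F(x)` dominates some minimal point `z` of `F(x)`, so
`y - z ∈ K`. The tuple `a` gives `ω(x) = |Min(F(x), K)|` pairwise distinct minimal points, hence
all of them, and so `z = f^{a_j}(x)` for some `j`. Then
`y - f^{a_j}(x + t s) = (y - z) + (z - f^{a_j}(x + t s)) ∈ K + int K ⊆ int K`,
and the same `t₀` works for `F`.
-/

open Set Filter Topology Pointwise

noncomputable section

variable {n m p : ℕ}

namespace IsSolidPointedCone

variable {E : Type*} [NormedAddCommGroup E] [NormedSpace ℝ E] {K : Set E}

lemma zero_mem_s5 (hK : IsSolidPointedCone K) : (0 : E) ∈ K := by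
  obtain ⟨k, hk⟩ := hK.solid
  simpa using hK.cone le_rfl (interior_subset hk)

lemma add_mem_s5 (hK : IsSolidPointedCone K) {u v : E} (hu : u ∈ K) (hv : v ∈ K) : u + v ∈ K := by
  have h := hK.convex hu hv (show (0 : ℝ) ≤ 1 / 2 by norm_num)
    (show (0 : ℝ) ≤ 1 / 2 by norm_num) (by norm_num)
  have h2 := hK.cone (show (0 : ℝ) ≤ 2 by norm_num) h
  rwa [← smul_add, smul_smul, show (2 : ℝ) * (1 / 2) = 1 by norm_num, one_smul] at h2

lemma add_mem_interior (hK : IsSolidPointedCone K) {u v : E} (hu : u ∈ K)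
    (hv : v ∈ interior K) : u + v ∈ interior K := by
  have hsub : K + interior K ⊆ interior K := by
    refine interior_maximal ?_ isOpen_interior.add_left
    rintro _ ⟨k, hk, l, hl, rfl⟩
    exact hK.add_mem_s5 hk (interior_subset hl)
  exact hsub (Set.add_mem_add hu hv)

/-- The domination property: every point of a finite set dominates a minimal point of it. -/
lemma exists_mem_minSet (hK : IsSolidPointedCone K) {A : Set E} (hA : A.Finite) {y : E}
    (hy : y ∈ A) : ∃ z ∈ minSet K A, y - z ∈ K := by
  -- Among the points below `y`, one with the fewest points of `A` below it is minimal.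
  obtain ⟨z, ⟨hzA, hyz⟩, hmin⟩ := Set.exists_min_image {z ∈ A | y - z ∈ K}
    (fun z => {w ∈ A | z - w ∈ K}.ncard) (hA.subset (Set.sep_subset _ _))
    ⟨y, hy, by simpa using hK.zero_mem_s5⟩
  refine ⟨z, ⟨hzA, ?_⟩, hyz⟩
  refine Set.eq_singleton_iff_unique_mem.2 ⟨⟨hzA, by simpa using hK.zero_mem_s5⟩, ?_⟩
  rintro w ⟨hwA, hzw⟩
  by_contra hne
  have hyw : y - w ∈ K := by simpa using hK.add_mem_s5 hyz hzw
  refine (hmin w ⟨hwA, hyw⟩).not_gt (Set.ncard_lt_ncard ?_ (hA.subset (Set.sep_subset _ _)))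
  refine (Set.ssubset_iff_of_subset ?_).2 ⟨z, ⟨hzA, by simpa using hK.zero_mem_s5⟩, ?_⟩
  · rintro v ⟨hvA, hwv⟩
    exact ⟨hvA, by simpa using hK.add_mem_s5 hzw hwv⟩
  · rintro ⟨-, hwz⟩
    have h0 : w - z = 0 := hK.pointed ⟨hwz, by simpa using hzw⟩
    exact hne (sub_eq_zero.1 h0)

end IsSolidPointedCone

/-- By counting, a tuple in the partition set reaches every minimal point of `F(x)`. -/
lemma range_eq_minSet {n m p : ℕ} {K : Set (Rvec m)} {f : Fin p → Rvec n → Rvec m} {x : Rvec n}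
    {a : Fin (omegaF K f x) → Fin p} (ha : a ∈ partSet K f x) :
    (Set.range fun j => f (a j) x) = minSet K (Fimg f x) := by
  obtain ⟨hmem, hinj, -⟩ := ha
  refine Set.eq_of_subset_of_ncard_le (Set.range_subset_iff.2 hmem) ?_
    ((Set.finite_range _).subset (Set.sep_subset _ _))
  rw [← Set.image_univ, Set.ncard_image_of_injective _ hinj, Set.ncard_univ, Nat.card_fin]
  exact le_rfl

/-- a K^ω-descent direction of f̃ᵃ at x is a ≼ˡ_K-descent direction of F at x. -/
theorem stmt5 (n m p : ℕ) (K : Set (Rvec m)) (hK : IsSolidPointedCone K)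
    (f : Fin p → Rvec n → Rvec m) (hf : ∀ i, ContDiff ℝ 2 (f i))
    (x : Rvec n) (a : Fin (omegaF K f x) → Fin p) (ha : a ∈ partSet K f x) (s : Rvec n)
    (hdesc : ∃ t₀ > (0 : ℝ), ∀ t ∈ Set.Ioc (0 : ℝ) t₀,
      ∀ j, f (a j) (x + t • s) - f (a j) x ∈ -(interior K)) :
    ∃ t₀' > (0 : ℝ), ∀ t ∈ Set.Ioc (0 : ℝ) t₀',
      Fimg f x ⊆ Fimg f (x + t • s) + interior K := by
  obtain ⟨t₀, ht₀, hd⟩ := hdesc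
  refine ⟨t₀, ht₀, fun t ht y hy => ?_⟩
  obtain ⟨z, hz, hyz⟩ := hK.exists_mem_minSet (Set.finite_range _) hy
  obtain ⟨j, rfl⟩ := (range_eq_minSet ha).ge hz
  have hj : f (a j) x - f (a j) (x + t • s) ∈ interior K := by
    simpa using Set.mem_neg.1 (hd t ht j)
  exact ⟨f (a j) (x + t • s), ⟨a j, rfl⟩, y - f (a j) (x + t • s),
    by simpa using hK.add_mem_interior hyz hj, by simp⟩
end
end

section
/- Let η₁ ∈ (0, 1), β ∈ (0, 1), Ω_min > 0, and K₂ > 0 with ‖D²f^{i}(y)‖ ≤ K₂ for all y ∈ ℝⁿ and i ∈ {1, …, p}; assume each f^{i} is bounded below with respect to K, i.e., there exists b^{i} ∈ ℝᵐ with f^{i}(y) − b^{i} ∈ K for all y ∈ ℝⁿ. Let sequences (x_k), (s_k) with s_k ≠ 0, (a^k) with a^k ∈ P_{x_k}, and (Ω_k) with Ω_k ≥ Ω_min satisfy: for every k, (a^k, s_k) attains the minimum of Θ_{x_k} over P_{x_k} × {s : ‖s‖ ≤ Ω_k} and the Cauchy decrease Δ_{−K}(m_k^{a^k_j}(0) −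 m_k^{a^k_j}(s_k)) ≥ −(β/2)(Δ_{−K}(Df^{a^k_j}(x_k)s_k)/‖s_k‖) min{ −Δ_{−K}(Df^{a^k_j}(x_k)s_k)/(‖s_k‖K₂), Ω_k } holds for all j; and let S ⊆ ℕ be the set of successful iterations, i.e., those k with ρ_k^{a^k_j} ≥ η₁ for all j and x_{k+1} = x_k + s_k, while x_{k+1} = x_k for k ∉ S. If S is infinite, then liminf_{k → ∞} max_{1 ≤ j ≤ ω(x_k)} |Δ_{−K}(Df^{a^k_j}(x_k)s_k)| / ‖s_k‖ = 0. -/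
/-!
Write `y ≤ z` for `z - y ∈ K` and `Δ` for the oriented distance to `-K`. Comparing the optimal
`s k` with the step `0` gives `Δ (Df s) ≤ 0` for every component, so the Cauchy decrease makes the
denominators of the reduction ratios nonnegative; on a successful iteration they are then positive,
and every minimal value `f (a k j) (x k)` is pushed down in the order of `K`. Moreover a component
with `|Δ (Df s)| / ‖s‖ ≥ ε` is pushed down by a whole ball of radius `δ = δ(ε)` (`successful_drop`).

If the limit inferior were positive, each late successful iteration would thus have a weakly
minimal value `v k` lying, together with a `δ`-ball around it, above a value of `F (x (k + 1))`.
This cannot happen infinitely often (`no_infinite_drops`), although the `v k` may belong to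
changing indices and need not stay bounded. Since the sets `F (x k)` go down in the lower set order,
the `δ`-ball around `v k` stays above some value of `F (x l)` for every `l > k`. Along a fixed
ultrafilter in `l` the index of that value can be taken constant, and by pigeonhole it is the same
index `i` for infinitely many `k`. The values `f i (x l)` lie in an order interval, which is compact
because `K` is closed and pointed, hence they converge along the ultrafilter. A time `l₀` at which
`f i (x l₀)` is close to the limit, followed by such a `k ≥ l₀`, puts `v k` in the interior of
`f i (x l₀) + K`, hence strictly above a value of `F (x k)`: this contradicts weak minimality.
-/

open Set Filter Topology Pointwise

noncomputable section

variable {n m p : ℕ}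

/-! ### Closed pointed cones and the oriented distance -/

section Cone

variable {E : Type*} [NormedAddCommGroup E] {K : Set E}

lemma ball_subset_of_oriDist_le {y : E} {δ : ℝ} (h : oriDist (-K) (-y) ≤ -δ) :
    Metric.ball y δ ⊆ K := by
  intro z hz
  by_contra hzK
  have h1 : Metric.infDist (-y) (-K)ᶜ ≤ dist (-y) (-z) :=
    Metric.infDist_le_dist_of_mem (by simpa using hzK)
  have h2 : 0 ≤ Metric.infDist (-y) (-K) := Metric.infDist_nonneg
  rw [dist_neg_neg, dist_comm] at h1
  rw [Metric.mem_ball] at hz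
  rw [oriDist] at h
  linarith

variable [NormedSpace ℝ E]

lemma IsSolidPointedCone.ball_add_subset (hK : IsSolidPointedCone K) {c h : E} {r : ℝ}
    (hc : Metric.ball c r ⊆ K) (hh : h ∈ K) : Metric.ball (c + h) r ⊆ K := by
  intro z hz
  have h1 : z - h ∈ Metric.ball c r := by
    rw [Metric.mem_ball, dist_eq_norm] at hz ⊢
    rwa [show z - h - c = z - (c + h) by abel]
  simpa using hK.add_mem (hc h1) hh

/-- A closed pointed cone in finite dimension is normal: order intervals are bounded. The constant
comes from minimizing the distance from `-y` to `K` over the unit vectors `y` of `K`. -/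
lemma IsSolidPointedCone.exists_norm_le [FiniteDimensional ℝ E] (hK : IsSolidPointedCone K) :
    ∃ C : ℝ, ∀ y z : E, y ∈ K → z - y ∈ K → ‖y‖ ≤ C * ‖z‖ := by
  have hne : K.Nonempty := ⟨0, hK.zero_mem⟩
  have hcomp : IsCompact (K ∩ Metric.sphere (0 : E) 1) :=
    (isCompact_sphere (0 : E) 1).inter_left hK.closed
  have hcont : Continuous fun y : E => Metric.infDist (-y) K :=
    (Metric.continuous_infDist_pt K).comp continuous_neg
  have hc : ∃ c : ℝ, 0 < c ∧ ∀ y ∈ K ∩ Metric.sphere (0 : E) 1, c ≤ Metric.infDist (-y) K := by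
    rcases (K ∩ Metric.sphere (0 : E) 1).eq_empty_or_nonempty with h | h
    · exact ⟨1, one_pos, by simp [h]⟩
    · obtain ⟨y, hy, hmin⟩ := hcomp.exists_isMinOn h hcont.continuousOn
      refine ⟨_, ?_, fun z hz => hmin hz⟩
      refine (hK.closed.notMem_iff_infDist_pos hne).1 fun hy' => ?_
      have h0 : y = 0 := hK.pointed ⟨hy.1, hy'⟩
      simpa [h0] using hy.2
  obtain ⟨c, hc0, hc⟩ := hc
  refine ⟨c⁻¹, fun y z hy hz => ?_⟩
  rcases eq_or_ne y 0 with rfl | hy0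
  · simp only [norm_zero]; positivity
  have hn : 0 < ‖y‖ := norm_pos_iff.2 hy0
  have h1 := hc (‖y‖⁻¹ • y) ⟨hK.cone (by positivity) hy, by simp [norm_smul, hn.ne']⟩
  have h2 : Metric.infDist (-(‖y‖⁻¹ • y)) K ≤ ‖y‖⁻¹ * ‖z‖ := by
    refine (Metric.infDist_le_dist_of_mem
      (hK.cone (by positivity : (0 : ℝ) ≤ ‖y‖⁻¹) hz)).trans_eq ?_
    rw [dist_eq_norm, smul_sub, ← norm_neg]
    simp [norm_smul]
  have h3 : c ≤ ‖z‖ / ‖y‖ := by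
    rw [div_eq_inv_mul]; exact h1.trans h2
  rw [le_div_iff₀ hn] at h3
  rw [inv_mul_eq_div, le_div_iff₀ hc0]
  linarith

lemma IsSolidPointedCone.isCompact_interval [FiniteDimensional ℝ E] (hK : IsSolidPointedCone K)
    (b v : E) : IsCompact {y : E | y - b ∈ K ∧ v - y ∈ K} := by
  have := FiniteDimensional.proper ℝ E
  obtain ⟨C, hC⟩ := hK.exists_norm_le
  refine Metric.isCompact_of_isClosed_isBounded ?_ ?_
  · exact (hK.closed.preimage (continuous_id.sub continuous_const)).inter
      (hK.closed.preimage (continuous_const.sub continuous_id))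
  · refine (Metric.isBounded_closedBall (x := b) (r := C * ‖v - b‖)).subset ?_
    rintro y ⟨h1, h2⟩
    rw [Metric.mem_closedBall, dist_eq_norm]
    exact hC _ _ h1 (by simpa using h2)

lemma oriDist_zero_nonpos (hK : IsSolidPointedCone K) : oriDist (-K) 0 ≤ 0 := by
  have h : Metric.infDist (0 : E) (-K) = 0 :=
    Metric.infDist_zero_of_mem (by simpa using hK.zero_mem)
  rw [oriDist, h, zero_sub, neg_nonpos]
  exact Metric.infDist_nonneg

lemma mem_of_oriDist_nonpos (hK : IsSolidPointedCone K) {y : E} (h : oriDist (-K) (-y) ≤ 0) :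
    y ∈ K := by
  by_contra hy
  have hne : (-K).Nonempty := ⟨0, by simpa using hK.zero_mem⟩
  have h1 : 0 < Metric.infDist (-y) (-K) :=
    (hK.closed.neg.notMem_iff_infDist_pos hne).1 (by simpa using hy)
  have h2 : Metric.infDist (-y) (-K)ᶜ = 0 := Metric.infDist_zero_of_mem (by simpa using hy)
  rw [oriDist, h2] at h
  linarith

/-! ### Descending families of finite sets -/

/-- Infinitely many uniform drops are impossible: for finite families `F k` that go down in the
lower set order and whose members are bounded below, a weakly minimal `v k` cannot have a whole
`δ`-ball around it above an element of `F (k + 1)` for infinitely many `k`. -/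
lemma no_infinite_drops [FiniteDimensional ℝ E] {ι : Type*} [Finite ι] (hK : IsSolidPointedCone K)
    (F : ℕ → ι → E) (hbdd : ∀ i, ∃ b, ∀ k, F k i - b ∈ K)
    (hmono : ∀ k i, ∃ j, F k i - F (k + 1) j ∈ K)
    (A : Set ℕ) (hA : A.Infinite) (v : ℕ → E) (δ : ℝ) (hδ : 0 < δ)
    (hw : ∀ k ∈ A, ∀ i, v k - F k i ∉ interior K)
    (hdrop : ∀ k ∈ A, ∃ i, Metric.ball (v k - F (k + 1) i) δ ⊆ K) : False := by
  have hmono' : ∀ k l, k ≤ l → ∀ i, ∃ j, F k i - F l j ∈ K := by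
    intro k l hkl
    induction l, hkl using Nat.le_induction with
    | base => exact fun i => ⟨i, by simpa using hK.zero_mem⟩
    | succ l _ ih =>
      intro i
      obtain ⟨j, hj⟩ := ih i
      obtain ⟨j', hj'⟩ := hmono l j
      exact ⟨j', by simpa using hK.add_mem hj hj'⟩
  have hdrop' : ∀ k ∈ A, ∀ l, k + 1 ≤ l → ∃ i, Metric.ball (v k - F l i) δ ⊆ K := by
    intro k hk l hl
    obtain ⟨i, hi⟩ := hdrop k hk
    obtain ⟨j, hj⟩ := hmono' _ _ hl i
    exact ⟨j, by simpa using hK.ball_add_subset hi hj⟩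
  set G : Ultrafilter ℕ := Filter.hyperfilter ℕ
  have hG : (G : Filter ℕ) ≤ atTop := Nat.hyperfilter_le_atTop
  have hτ : ∀ k ∈ A, ∃ i, ∀ᶠ l in (G : Filter ℕ), Metric.ball (v k - F l i) δ ⊆ K := by
    intro k hk
    by_contra! hcon
    have h1 : ∀ᶠ l in (G : Filter ℕ), ∀ i, ¬ Metric.ball (v k - F l i) δ ⊆ K :=
      Filter.eventually_all.2 hcon
    obtain ⟨l, hl, hl'⟩ := (h1.and (hG (Filter.eventually_ge_atTop (k + 1)))).exists
    obtain ⟨i, hi⟩ := hdrop' k hk l hl'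
    exact hl i hi
  have hi : ∃ i, ∃ᶠ k in atTop, k ∈ A ∧
      ∀ᶠ l in (G : Filter ℕ), Metric.ball (v k - F l i) δ ⊆ K := by
    by_contra! hcon
    have h1 := Filter.eventually_all.2 hcon
    obtain ⟨k, hk, hk'⟩ := ((Nat.frequently_atTop_iff_infinite.2 hA).and_eventually h1).exists
    obtain ⟨i, hi⟩ := hτ k hk
    obtain ⟨l, hl, hl'⟩ := (hi.and (hk' i hk)).exists
    exact hl' hl
  obtain ⟨i, hi⟩ := hi
  obtain ⟨k₀, -, hk₀⟩ := hi.exists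
  obtain ⟨b, hb⟩ := hbdd i
  have hmem : ∀ᶠ l in (G : Filter ℕ), F l i ∈ {y : E | y - b ∈ K ∧ v k₀ - y ∈ K} := by
    filter_upwards [hk₀] with l hl
    exact ⟨hb l, hl (Metric.mem_ball_self hδ)⟩
  obtain ⟨w, -, hlim⟩ := (hK.isCompact_interval b (v k₀)).ultrafilter_le_nhds
    (G.map fun l => F l i) (Filter.le_principal_iff.2 hmem)
  have hnear : ∀ᶠ l in (G : Filter ℕ), dist (F l i) w < δ / 2 :=
    hlim (Metric.ball_mem_nhds w (half_pos hδ))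
  obtain ⟨l₀, hl₀⟩ := hnear.exists
  obtain ⟨k, ⟨hkA, hk⟩, hkl⟩ := (hi.and_eventually (Filter.eventually_ge_atTop l₀)).exists
  obtain ⟨l, hl, hlw⟩ := (hk.and hnear).exists
  obtain ⟨j, hj⟩ := hmono' l₀ k hkl i
  refine hw k hkA j (interior_maximal (hK.ball_add_subset hl hj) Metric.isOpen_ball ?_)
  have h1 : dist (F l₀ i) (F l i) < δ := by
    linarith [dist_triangle_right (F l₀ i) (F l i) w]
  rw [Metric.mem_ball, dist_eq_norm,
    show v k - F k j - (v k - F l i + (F l₀ i - F k j)) = -(F l₀ i - F l i) by abel, norm_neg,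
    ← dist_eq_norm]
  exact h1

end Cone

/-! ### Minimal values and successful iterations -/

/-- Every value of a finite family lies above a minimal one. -/
lemma exists_minSet_le {K : Set (Rvec m)} (hK : IsSolidPointedCone K)
    (f : Fin p → Rvec n → Rvec m) (x : Rvec n) (i : Fin p) :
    ∃ v ∈ minSet K (Fimg f x), f i x - v ∈ K := by
  let r : Fin p → Fin p → Prop := fun j l => f l x - f j x ∈ K ∧ f j x ≠ f l x
  have : IsTrans (Fin p) r := ⟨by
    rintro a b c ⟨h1, h1'⟩ ⟨h2, h2'⟩
    refine ⟨by simpa using hK.add_mem h2 h1, fun h => h1' ?_⟩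
    have h3 : f b x - f a x = 0 := hK.pointed ⟨h1, by simpa [h] using h2⟩
    exact (sub_eq_zero.1 h3).symm⟩
  have : Std.Irrefl r := ⟨fun a h => h.2 rfl⟩
  obtain ⟨j, hj, hmin⟩ := (Finite.wellFounded_of_trans_of_irrefl r).has_min
    {j | f i x - f j x ∈ K} ⟨i, by simpa using hK.zero_mem⟩
  refine ⟨f j x, ⟨⟨j, rfl⟩, ?_⟩, hj⟩
  ext z
  constructor
  · rintro ⟨⟨l, rfl⟩, hl⟩
    by_contra hne
    refine hmin l ?_ ⟨hl, hne⟩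
    simpa using hK.add_mem hj hl
  · rintro rfl
    exact ⟨⟨j, rfl⟩, by simpa using hK.zero_mem⟩

/-- A tuple of the partition set has as many entries as there are minimal values, so the values it
selects are all the minimal ones. -/
lemma exists_partSet_le {K : Set (Rvec m)} (hK : IsSolidPointedCone K)
    (f : Fin p → Rvec n → Rvec m) (x : Rvec n) {a : Fin (omegaF K f x) → Fin p}
    (ha : a ∈ partSet K f x) (i : Fin p) : ∃ j, f i x - f (a j) x ∈ K := by
  obtain ⟨v, hv, hiv⟩ := exists_minSet_le hK f x i
  have hfin : (minSet K (Fimg f x)).Finite := (Set.finite_range _).subset fun y hy => hy.1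
  have hsub : (Set.range fun j => f (a j) x) ⊆ minSet K (Fimg f x) := by
    rintro _ ⟨j, rfl⟩
    exact ha.1 j
  have hcard : (minSet K (Fimg f x)).ncard ≤ (Set.range fun j => f (a j) x).ncard := by
    rw [← Set.image_univ, Set.ncard_image_of_injective _ ha.2.1, Set.ncard_univ, Nat.card_fin]
    exact le_rfl
  rw [← Set.eq_of_subset_of_ncard_le hsub hcard hfin] at hv
  obtain ⟨j, rfl⟩ := hv
  exact ⟨j, hiv⟩

/-- The actual decrease `D` on a successful iteration, in terms of `d = -Δ (Df s) / ‖s‖` and the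
model decrease `den`. A successful ratio forces `den ≠ 0`, as division by zero gives the ratio
`0 < η`. -/
lemma successful_drop {η β K₂ Ωmin Ω d den D : ℝ} (hη : 0 < η) (hβ : 0 < β) (hK₂ : 0 < K₂)
    (hΩmin : 0 < Ωmin) (hΩ : Ωmin ≤ Ω) (hd : 0 ≤ d) (hden : β / 2 * d * min (d / K₂) Ω ≤ den)
    (hρ : η ≤ -D / den) :
    D ≤ 0 ∧ ∀ ε, 0 < ε → ε ≤ d → D ≤ -(η * (β / 2 * ε * min (ε / K₂) Ωmin)) := by
  have hden0 : 0 ≤ den := by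
    refine le_trans ?_ hden
    have : 0 ≤ min (d / K₂) Ω := le_min (by positivity) (hΩmin.le.trans hΩ)
    positivity
  have hpos : 0 < den := by
    refine lt_of_le_of_ne hden0 fun h => ?_
    rw [← h, div_zero] at hρ
    linarith
  rw [le_div_iff₀ hpos] at hρ
  refine ⟨by nlinarith, fun ε hε hεd => ?_⟩
  have h0 : 0 ≤ min (ε / K₂) Ωmin := le_min (by positivity) hΩmin.le
  have h1 : β / 2 * ε * min (ε / K₂) Ωmin ≤ β / 2 * d * min (d / K₂) Ω := by gcongr
  nlinarith [mul_le_mul_of_nonneg_left (h1.trans hden) hη.le]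

/-- if infinitely many iterations are successful, then
liminf_k max_j |Δ_{−K}(Df^{a^k_j}(x_k)s_k)| / ‖s_k‖ = 0. -/
theorem stmt15 (n m p : ℕ) (K : Set (Rvec m)) (hK : IsSolidPointedCone K)
    (f : Fin p → Rvec n → Rvec m) (hf : ∀ i, ContDiff ℝ 2 (f i))
    (η₁ β Ωmin K₂ : ℝ)
    (hη₁ : 0 < η₁) (hη₁' : η₁ < 1) (hβ : 0 < β) (hβ' : β < 1)
    (hΩmin : 0 < Ωmin) (hK₂ : 0 < K₂)
    (hHess : ∀ (y : Rvec n) (i : Fin p), ‖fderiv ℝ (fderiv ℝ (f i)) y‖ ≤ K₂)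
    (hbdd : ∀ i : Fin p, ∃ b : Rvec m, ∀ y : Rvec n, f i y - b ∈ K)
    (x : ℕ → Rvec n) (Ω : ℕ → ℝ) (s : ℕ → Rvec n)
    (a : ∀ k, Fin (omegaF K f (x k)) → Fin p) (S : Set ℕ)
    (hΩ : ∀ k, Ωmin ≤ Ω k)
    (hs0 : ∀ k, s k ≠ 0)
    (ha : ∀ k, a k ∈ partSet K f (x k))
    (hsk : ∀ k, ‖s k‖ ≤ Ω k)
    (hmin : ∀ k, ∀ a' ∈ partSet K f (x k), ∀ s' : Rvec n, ‖s'‖ ≤ Ω k →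
      Theta K f (x k) (a k) (s k) ≤ Theta K f (x k) a' s')
    (hCauchy : ∀ k, ∀ j,
      -(β / 2) * (oriDist (-K) (fderiv ℝ (f (a k j)) (x k) (s k)) / ‖s k‖) *
          min (-(oriDist (-K) (fderiv ℝ (f (a k j)) (x k) (s k))) / (‖s k‖ * K₂)) (Ω k) ≤
        oriDist (-K) (model f (a k j) (x k) 0 - model f (a k j) (x k) (s k)))
    (hS : ∀ k, k ∈ S ↔ ∀ j, η₁ ≤
      -(oriDist (-K) (f (a k j) (x k + s k) - f (a k j) (x k))) /
        oriDist (-K) (model f (a k j) (x k) 0 - model f (a k j) (x k) (s k)))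
    (hsucc : ∀ k ∈ S, x (k + 1) = x k + s k)
    (hfail : ∀ k ∉ S, x (k + 1) = x k)
    (hSinf : S.Infinite) :
    Filter.liminf (fun k => ⨆ j : Fin (omegaF K f (x k)),
      |oriDist (-K) (fderiv ℝ (f (a k j)) (x k) (s k))| / ‖s k‖) Filter.atTop = 0 := by
  have hlin : ∀ k j, oriDist (-K) (fderiv ℝ (f (a k j)) (x k) (s k)) ≤ 0 := by
    intro k j
    have h1 : Theta K f (x k) (a k) (s k) ≤ 0 := by
      refine (hmin k (a k) (ha k) 0 ?_).trans (Real.iSup_le (fun j => ?_) le_rfl)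
      · simpa using hΩmin.le.trans (hΩ k)
      · simpa [model] using oriDist_zero_nonpos hK
    refine le_trans ((le_max_right (oriDist (-K) (model f (a k j) (x k) (s k))) _).trans ?_) h1
    exact le_ciSup (f := fun j => max (oriDist (-K) (model f (a k j) (x k) (s k)))
      (oriDist (-K) (fderiv ℝ (f (a k j)) (x k) (s k)))) (Set.finite_range _).bddAbove j
  have hsucc_drop : ∀ k ∈ S, ∀ j,
      oriDist (-K) (f (a k j) (x (k + 1)) - f (a k j) (x k)) ≤ 0 ∧ ∀ ε, 0 < ε →
        ε ≤ |oriDist (-K) (fderiv ℝ (f (a k j)) (x k) (s k))| / ‖s k‖ →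
        oriDist (-K) (f (a k j) (x (k + 1)) - f (a k j) (x k)) ≤
          -(η₁ * (β / 2 * ε * min (ε / K₂) Ωmin)) := by
    intro k hk j
    rw [hsucc k hk, abs_of_nonpos (hlin k j)]
    have hn : 0 < ‖s k‖ := norm_pos_iff.2 (hs0 k)
    refine successful_drop hη₁ hβ hK₂ hΩmin (hΩ k)
      (div_nonneg (neg_nonneg.2 (hlin k j)) hn.le) ?_ ((hS k).1 hk j)
    refine le_trans (le_of_eq ?_) (hCauchy k j)
    rw [div_div]
    ring
  have hmono : ∀ k i, ∃ j, f i (x k) - f j (x (k + 1)) ∈ K := by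
    intro k i
    by_cases hk : k ∈ S
    · obtain ⟨j, hj⟩ := exists_partSet_le hK f (x k) (ha k) i
      refine ⟨a k j, ?_⟩
      have h2 : f (a k j) (x k) - f (a k j) (x (k + 1)) ∈ K :=
        mem_of_oriDist_nonpos hK (by simpa using (hsucc_drop k hk j).1)
      simpa using hK.add_mem hj h2
    · exact ⟨i, by simpa [hfail k hk] using hK.zero_mem⟩
  have hnonneg : ∀ k, 0 ≤ ⨆ j : Fin (omegaF K f (x k)),
      |oriDist (-K) (fderiv ℝ (f (a k j)) (x k) (s k))| / ‖s k‖ :=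
    fun k => Real.iSup_nonneg fun j => by positivity
  rw [Filter.liminf_eq]
  refine IsGreatest.csSup_eq ⟨Filter.Eventually.of_forall hnonneg, fun c hc => ?_⟩
  by_contra! hc0
  obtain ⟨k₁, hk₁⟩ := Filter.eventually_atTop.1 hc
  have hj : ∀ k, k₁ ≤ k → ∃ j,
      c / 2 ≤ |oriDist (-K) (fderiv ℝ (f (a k j)) (x k) (s k))| / ‖s k‖ := by
    intro k hk
    by_contra! hcon
    have := (hk₁ k hk).trans (Real.iSup_le (fun j => (hcon j).le) (half_pos hc0).le)
    linarith
  have hA : (S ∩ Set.Ici k₁).Infinite :=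
    Nat.frequently_atTop_iff_infinite.1 ((Nat.frequently_atTop_iff_infinite.2 hSinf).and_eventually
      (Filter.eventually_ge_atTop k₁))
  have hsel : ∀ k, ∃ i : Fin p, k ∈ S ∩ Set.Ici k₁ →
      f i (x k) ∈ wminSet K (Fimg f (x k)) ∧ Metric.ball (f i (x k) - f i (x (k + 1)))
        (η₁ * (β / 2 * (c / 2) * min (c / 2 / K₂) Ωmin)) ⊆ K := by
    intro k
    by_cases hk : k ∈ S ∩ Set.Ici k₁
    · obtain ⟨j, hjc⟩ := hj k hk.2
      refine ⟨a k j, fun _ => ⟨?_, ball_subset_of_oriDist_le ?_⟩⟩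
      · rw [← (ha k).2.2]
        exact ⟨j, rfl⟩
      · rw [neg_sub]
        exact (hsucc_drop k hk.1 j).2 _ (half_pos hc0) hjc
    -- any index will do here; one exists since the maximum at `k₁` is positive
    · exact ⟨a k₁ (hj k₁ le_rfl).choose, fun h => absurd h hk⟩
  choose i hi using hsel
  refine no_infinite_drops hK (fun k i => f i (x k))
    (fun i => (hbdd i).imp fun b hb k => hb (x k)) hmono _ hA (fun k => f (i k) (x k)) _ ?_
    (fun k hk l hl => ?_) (fun k hk => ⟨i k, (hi k hk).2⟩)
  · have : 0 < min (c / 2 / K₂) Ωmin := lt_min (by positivity) hΩmin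
    positivity
  · have h : f l (x k) ∈ {z ∈ Fimg f (x k) | f (i k) (x k) - z ∈ interior K} := ⟨⟨l, rfl⟩, hl⟩
    rw [(hi k hk).1.2] at h
    exact h
end
end
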